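/- Let A be an invertible (m+n)×(m+n) matrix over ℒ with distance function F_A, let λ₁,…,λ_{m+n} be the successive minima of F_A, and let σ₁,…,σ_{m+n} be the successive minima of the polar distance function F_A^*(y) = sup_{x ≠ 0} ‖x·y‖ / F_A(x). Then λ_m σ_{n+1} = 1. -/

import Mathlib

/-!
Common setup: the field `ℒ = 𝔽((X⁻¹))` of formal Laurent series with coefficients
in a finite field `𝔽` of `k` elements.  We realize `ℒ` as `LaurentSeries 𝔽`
(Hahn series over `ℤ`) in the variable `T = X⁻¹`, so that `X` corresponds to `T⁻¹`
and the polynomial ring `𝔽[X]` corresponds to series supported on nonpositive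
exponents.  The absolute value of `x = Σ_{i ≤ N} a_i X^i` (with `a_N ≠ 0`) is
`k^N`, i.e. `k^(-order x)` in terms of the `T`-adic order.
-/

open scoped Classical ENNReal NNReal
open MeasureTheory

noncomputable section

namespace FSBad

/-- The field `ℒ = 𝔽((X⁻¹))`. -/
abbrev L (𝔽 : Type) [Field 𝔽] : Type := LaurentSeries 𝔽

variable {𝔽 : Type} [Field 𝔽] [Fintype 𝔽]

/-- The absolute value `‖·‖` on `ℒ`: `‖x‖ = k^(deg_X x)`, `‖0‖ = 0`. -/
def lnorm (x : L 𝔽) : ℝ := if x = 0 then 0 else (Fintype.card 𝔽 : ℝ) ^ (-x.order)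

/-- Membership in the polynomial ring `𝔽[X] ⊆ ℒ` (polynomials in `X = T⁻¹`). -/
def IsPoly (x : L 𝔽) : Prop := ∀ i : ℤ, 0 < i → x.coeff i = 0

/-- The height (sup-norm) `‖·‖_∞` on `ℒ^ι`. -/
def vnorm {ι : Type*} (x : ι → L 𝔽) : ℝ := ⨆ i, lnorm (x i)

/-- The closed ball in `ℒ^ι` with centre `c` and radius `ρ`. -/
def vball {ι : Type*} (c : ι → L 𝔽) (ρ : ℝ) : Set (ι → L 𝔽) :=
  {x | vnorm (fun i => x i - c i) ≤ ρ}

/-- `m × n` matrices over `ℒ`, identified with `ℒ^(mn)`. -/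
abbrev Mat (𝔽 : Type) [Field 𝔽] (m n : ℕ) : Type := Matrix (Fin m) (Fin n) (L 𝔽)

/-- The height of a matrix, i.e. the sup-norm on `ℒ^(mn)`. -/
def mnorm {m n : ℕ} (A : Mat 𝔽 m n) : ℝ := ⨆ p : Fin m × Fin n, lnorm (A p.1 p.2)

/-- The closed ball in `ℒ^(mn)` with centre `c` and radius `ρ`. -/
def mball {m n : ℕ} (c : Mat 𝔽 m n) (ρ : ℝ) : Set (Mat 𝔽 m n) :=
  {A | mnorm (A - c) ≤ ρ}

/-- The distance `⟨x⟩` from `x ∈ ℒ^h` to the polynomial lattice `𝔽[X]^h`. -/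
def latDist {h : ℕ} (x : Fin h → L 𝔽) : ℝ :=
  sInf {r : ℝ | ∃ p : Fin h → L 𝔽, (∀ i, IsPoly (p i)) ∧ r = vnorm (fun i => x i - p i)}

/-- The set `𝔅(m,n)` of badly approximable systems of `m` linear forms in `n`
variables over `ℒ`. -/
def Bad (𝔽 : Type) [Field 𝔽] [Fintype 𝔽] (m n : ℕ) : Set (Mat 𝔽 m n) :=
  {A | ∃ K : ℝ, 0 < K ∧ ∀ q : Fin m → L 𝔽, (∀ i, IsPoly (q i)) → q ≠ 0 →
    latDist (Matrix.vecMul q A) ^ n > K / vnorm q ^ m}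

/-- The Hausdorff `s`-measure of `E ⊆ ℒ^(mn)`, defined through countable covers by
balls of radii `< δ`, letting `δ → 0` (the infimum over `δ`-covers is nonincreasing
in `δ`, so the limit is the supremum over `δ > 0`). -/
def hMeasure {m n : ℕ} (s : ℝ) (E : Set (Mat 𝔽 m n)) : ℝ≥0∞ :=
  ⨆ (δ : ℝ) (_ : 0 < δ),
    ⨅ (c : ℕ → Mat 𝔽 m n) (ρ : ℕ → ℝ) (_ : ∀ i, 0 < ρ i ∧ ρ i < δ)
      (_ : E ⊆ ⋃ i, mball (c i) (ρ i)), ∑' i, ENNReal.ofReal (ρ i ^ s)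

/-- The Hausdorff dimension of `E ⊆ ℒ^(mn)`. -/
def hdim {m n : ℕ} (E : Set (Mat 𝔽 m n)) : ℝ :=
  sInf {s : ℝ | 0 ≤ s ∧ hMeasure s E = 0}

/-! ### Schmidt `(α,β)`-games on `ℒ^(mn)` -/

/-- A formal ball: an element of `Ω = ℒ^(mn) × ℝ`. -/
structure FBall (𝔽 : Type) [Field 𝔽] (m n : ℕ) where
  /-- centre -/
  c : Mat 𝔽 m n
  /-- radius -/
  r : ℝ

/-- Formal inclusion of formal balls: `(c₁,ρ₁) ⊆ (c₂,ρ₂)` iff `ρ₁ + ‖c₁ - c₂‖_∞ ≤ ρ₂`. -/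
def FBall.ssub {m n : ℕ} (B₁ B₂ : FBall 𝔽 m n) : Prop :=
  B₁.r + mnorm (B₁.c - B₂.c) ≤ B₂.r

/-- The subset of `ℒ^(mn)` determined by a formal ball. -/
def FBall.toSet {m n : ℕ} (B : FBall 𝔽 m n) : Set (Mat 𝔽 m n) := mball B.c B.r

/-- A strategy for White: given the balls `B₁, …, B_{i+1}` chosen by Black so far,
produce White's next ball. -/
abbrev Strategy (𝔽 : Type) [Field 𝔽] (m n : ℕ) : Type :=
  (i : ℕ) → (Fin (i + 1) → FBall 𝔽 m n) → FBall 𝔽 m n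

/-- White's move at stage `i` when following strategy `str` against Black's balls `B`. -/
def wMove {m n : ℕ} (str : Strategy 𝔽 m n) (B : ℕ → FBall 𝔽 m n) (i : ℕ) : FBall 𝔽 m n :=
  str i fun j => B j.1

/-- Black's move `B_{j+2}` is legal (for parameter `β`): it is a formal subset of
White's ball `W_{j+1}` and has radius `β · ρ(W_{j+1})`. -/
def BlackOk {m n : ℕ} (β : ℝ) (str : Strategy 𝔽 m n) (B : ℕ → FBall 𝔽 m n) (j : ℕ) : Prop :=
  (B (j + 1)).ssub (wMove str B j) ∧ (B (j + 1)).r = β * (wMove str B j).r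

/-- White's move `W_{i+1}` is legal (for parameter `α`): it is a formal subset of
Black's ball `B_{i+1}` and has radius `α · ρ(B_{i+1})`. -/
def WhiteOk {m n : ℕ} (α : ℝ) (str : Strategy 𝔽 m n) (B : ℕ → FBall 𝔽 m n) (i : ℕ) : Prop :=
  (wMove str B i).ssub (B i) ∧ (wMove str B i).r = α * (B i).r

/-- `str` is a winning strategy for White in the `(α,β;S)`-game: against any
sequence of Black balls, White's moves are legal as long as Black has played
legally so far, and if the whole play is legal then the intersection of the
chosen balls is contained in `S`. -/
def WinningStrategy {m n : ℕ} (α β : ℝ) (S : Set (Mat 𝔽 m n)) (str : Strategy 𝔽 m n) : Prop :=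
  ∀ B : ℕ → FBall 𝔽 m n, 0 ≤ (B 0).r →
    (∀ i, (∀ j < i, BlackOk β str B j) → WhiteOk α str B i) ∧
    ((∀ j, BlackOk β str B j) → (⋂ i, (B i).toSet) ⊆ S)

/-- `S` is `(α,β)`-winning. -/
def IsWinningAB {m n : ℕ} (α β : ℝ) (S : Set (Mat 𝔽 m n)) : Prop :=
  ∃ str : Strategy 𝔽 m n, WinningStrategy α β S str

/-- `S` is `α`-winning. -/
def IsWinningA {m n : ℕ} (α : ℝ) (S : Set (Mat 𝔽 m n)) : Prop :=
  ∀ β : ℝ, 0 < β → β < 1 → IsWinningAB α β S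

/-- The winning dimension of `S` (a supremum of a set of reals, which is `0` by
convention when the set is empty). -/
def windim {m n : ℕ} (S : Set (Mat 𝔽 m n)) : ℝ :=
  sSup {α : ℝ | 0 < α ∧ α < 1 ∧ IsWinningA α S}

/-! ### The matrices `Ā`, `Ā^*` and the quantities `M_v`, `D_v`, `∇D_v` -/

/-- `Ā = [[A, I_m], [I_n, 0]]`. Rows are indexed by `Fin m ⊕ Fin n`
(coordinates `q_1, …, q_{m+n}`), columns by `Fin n ⊕ Fin m`. -/
def Abar {m n : ℕ} (A : Mat 𝔽 m n) : Matrix (Fin m ⊕ Fin n) (Fin n ⊕ Fin m) (L 𝔽) :=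
  Matrix.fromBlocks A 1 1 0

/-- `Ā^* = [[Aᵀ, I_n], [I_m, 0]]`. Rows are indexed by `Fin n ⊕ Fin m`,
columns by `Fin m ⊕ Fin n`. -/
def AbarStar {m n : ℕ} (A : Mat 𝔽 m n) : Matrix (Fin n ⊕ Fin m) (Fin m ⊕ Fin n) (L 𝔽) :=
  Matrix.fromBlocks A.transpose 1 1 0

/-- The standard bilinear form `x·y = Σ_i x_i y_i` on `ℒ^ι`. -/
def dotL {ι : Type*} [Fintype ι] (x y : ι → L 𝔽) : L 𝔽 := ∑ i, x i * y i

/-- Strictly increasing `v`-tuples `1 ≤ i_1 < ⋯ < i_v ≤ m`. -/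
def IncTuple (v m : ℕ) : Type := {f : Fin v → Fin m // StrictMono f}

/-- The vector `M_v(A) ∈ ℒ^(C(m,v)²)` of the determinants
`det (y_{i_r} · C_{j_s}(Ā^*))_{1 ≤ r,s ≤ v}` over all strictly increasing index
tuples.  (For `v = 0` every coordinate is an empty determinant, i.e. `1`.) -/
def MvVec {m n : ℕ} (y : Fin m → (Fin n ⊕ Fin m → L 𝔽)) (v : ℕ) (A : Mat 𝔽 m n) :
    IncTuple v m × IncTuple v m → L 𝔽 := fun p =>
  Matrix.det (Matrix.of fun r s : Fin v =>
    dotL (y (p.1.1 r)) fun t => AbarStar A t (Sum.inl (p.2.1 s)))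

/-- `‖M_v(A)‖_∞`. -/
def MvNorm {m n : ℕ} (y : Fin m → (Fin n ⊕ Fin m → L 𝔽)) (v : ℕ) (A : Mat 𝔽 m n) : ℝ :=
  vnorm (MvVec y v A)

/-- `M_v(K) = max_{A ∈ K} ‖M_v(A)‖_∞` for `K ⊆ ℒ^(mn)`. -/
def MvSet {m n : ℕ} (y : Fin m → (Fin n ⊕ Fin m → L 𝔽)) (v : ℕ) (K : Set (Mat 𝔽 m n)) : ℝ :=
  sSup {r : ℝ | ∃ A ∈ K, r = MvNorm y v A}

/-- `D_v(A) = det (y_h · C_l(Ā^*))_{1 ≤ h,l ≤ v}`. -/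
def Dv {m n : ℕ} (y : Fin m → (Fin n ⊕ Fin m → L 𝔽)) (v : ℕ) (hv : v ≤ m)
    (A : Mat 𝔽 m n) : L 𝔽 :=
  Matrix.det (Matrix.of fun h l : Fin v =>
    dotL (y (Fin.castLE hv h)) fun t => AbarStar A t (Sum.inl (Fin.castLE hv l)))

/-- The discrete gradient `∇D_v(A) ∈ ℒ^(mn)`, with coordinates
`D_v(A + E_{ij}) - D_v(A)`. -/
def gradDv {m n : ℕ} (y : Fin m → (Fin n ⊕ Fin m → L 𝔽)) (v : ℕ) (hv : v ≤ m)
    (A : Mat 𝔽 m n) : Fin m × Fin n → L 𝔽 := fun p =>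
  Dv y v hv (A + Matrix.single p.1 p.2 1) - Dv y v hv A

/-- `y_1, …, y_m ∈ ℒ^(m+n)` form an orthonormal system: `y_h · y_{h'} = δ_{h h'}`
and `‖t_1 y_1 + ⋯ + t_m y_m‖_∞ = max_h ‖t_h‖`. -/
def OrthoSystem {m n : ℕ} (y : Fin m → (Fin n ⊕ Fin m → L 𝔽)) : Prop :=
  (∀ h h', dotL (y h) (y h') = if h = h' then 1 else 0) ∧
  (∀ t : Fin m → L 𝔽, vnorm (fun r => ∑ h, t h * y h r) = ⨆ h, lnorm (t h))

/-! ### Distance functions, parallelepipeds and successive minima -/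

/-- The `j`-th successive minimum of a distance function `F` on `ℒ^N`: the infimum
of all `λ > 0` such that `{F < λ}` contains `j` linearly independent points of
`𝔽[X]^N`. -/
def succMin {N : ℕ} (F : (Fin N → L 𝔽) → ℝ) (j : ℕ) : ℝ :=
  sInf {lam : ℝ | 0 < lam ∧ ∃ v : Fin j → (Fin N → L 𝔽),
    (∀ r, ∀ i, IsPoly (v r i)) ∧ LinearIndependent (L 𝔽) v ∧ ∀ r, F (v r) < lam}

/-- The distance function `F_A(x) = max_j c_j⁻¹ ‖Σ_i x_i a_{ij}‖`. -/
def FA {N : ℕ} (A : Matrix (Fin N) (Fin N) (L 𝔽)) (c : Fin N → ℝ)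
    (x : Fin N → L 𝔽) : ℝ :=
  ⨆ j, (c j)⁻¹ * lnorm (∑ i, x i * A i j)

/-- The parallelepiped `P_A(λ) = {x ∈ ℒ^N : F_A(x) < λ}`. -/
def PA {N : ℕ} (A : Matrix (Fin N) (Fin N) (L 𝔽)) (c : Fin N → ℝ) (lam : ℝ) :
    Set (Fin N → L 𝔽) := {x | FA A c x < lam}

/-- The polar distance function `F_A^*(y) = sup_{x ≠ 0} ‖x·y‖ / F_A(x)`. -/
def FAstar {N : ℕ} (A : Matrix (Fin N) (Fin N) (L 𝔽)) (c : Fin N → ℝ)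
    (y : Fin N → L 𝔽) : ℝ :=
  ⨆ x : {x : Fin N → L 𝔽 // x ≠ 0}, lnorm (dotL x.1 y) / FA A c x.1

/-! ### Haar measure, characterized by translation invariance and normalization -/

/-- The Borel σ-algebra on `ℒ^N`, generated by the balls. -/
def vecSigma (𝔽 : Type) [Field 𝔽] [Fintype 𝔽] (N : ℕ) : MeasurableSpace (Fin N → L 𝔽) :=
  MeasurableSpace.generateFrom {s | ∃ c ρ, (0 : ℝ) < ρ ∧ s = vball c ρ}

/-- `μ` is the Haar measure on `ℒ^N`: translation invariant and normalized so that
the unit ball `I^N` has measure `1` (these properties determine it uniquely). -/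
def IsHaarVec {N : ℕ} (μ : @Measure (Fin N → L 𝔽) (vecSigma 𝔽 N)) : Prop :=
  (∀ (v : Fin N → L 𝔽) (s : Set (Fin N → L 𝔽)), μ ((fun x => x + v) ⁻¹' s) = μ s) ∧
  μ {x | ∀ i, lnorm (x i) < 1} = 1

/-- The Borel σ-algebra on `ℒ^(mn)`, generated by the balls. -/
def matSigma (𝔽 : Type) [Field 𝔽] [Fintype 𝔽] (m n : ℕ) : MeasurableSpace (Mat 𝔽 m n) :=
  MeasurableSpace.generateFrom {s | ∃ c ρ, (0 : ℝ) < ρ ∧ s = mball c ρ}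

/-- `μ` is the Haar measure on `ℒ^(mn)`: translation invariant and normalized so
that the unit ball `I^(mn)` has measure `1`. -/
def IsHaarMat {m n : ℕ} (μ : @Measure (Mat 𝔽 m n) (matSigma 𝔽 m n)) : Prop :=
  (∀ (v : Mat 𝔽 m n) (s : Set (Mat 𝔽 m n)), μ ((fun x => x + v) ⁻¹' s) = μ s) ∧
  μ {A | ∀ i j, lnorm (A i j) < 1} = 1

/-! ### The constants of Section 3 -/

/-- `τ = m/(m+n)`. -/
def tau (m n : ℕ) : ℝ := m / (m + n)

/-- `δ = R^(-m(m+n)²)`. -/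
def del (R : ℝ) (m n : ℕ) : ℝ := R ^ (-((m : ℝ) * ((m : ℝ) + n) ^ 2))

/-- `δ* = R^(-n(m+n)²)`. -/
def delStar (R : ℝ) (m n : ℕ) : ℝ := R ^ (-((n : ℝ) * ((m : ℝ) + n) ^ 2))

/-! ### Helper lemmas -/

lemma lnorm_zero : lnorm (0 : L 𝔽) = 0 := by simp [lnorm]

lemma card_gt_one : (1 : ℝ) < (Fintype.card 𝔽 : ℝ) := by
  exact_mod_cast Fintype.one_lt_card

lemma lnorm_nonneg (x : L 𝔽) : 0 ≤ lnorm x := by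
  unfold lnorm
  split_ifs
  · exact le_rfl
  · positivity

lemma lnorm_pos {x : L 𝔽} (h : x ≠ 0) : 0 < lnorm x := by
  have := card_gt_one (𝔽 := 𝔽)
  unfold lnorm
  rw [if_neg h]
  positivity

lemma lnorm_one : lnorm (1 : L 𝔽) = 1 := by simp [lnorm]

lemma lnorm_mul (x y : L 𝔽) : lnorm (x * y) = lnorm x * lnorm y := by
  have := card_gt_one (𝔽 := 𝔽)
  by_cases hx : x = 0
  · simp [hx, lnorm_zero]
  by_cases hy : y = 0
  · simp [hy, lnorm_zero]
  unfold lnorm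
  rw [if_neg hx, if_neg hy, if_neg (mul_ne_zero hx hy), HahnSeries.order_mul hx hy, neg_add,
    zpow_add₀ (by positivity)]

lemma lnorm_neg (x : L 𝔽) : lnorm (-x) = lnorm x := by
  simp [lnorm, HahnSeries.order_neg]

lemma lnorm_add (x y : L 𝔽) : lnorm (x + y) ≤ max (lnorm x) (lnorm y) := by
  have h1 := card_gt_one (𝔽 := 𝔽)
  by_cases hx : x = 0
  · simp [hx, lnorm_zero]
  by_cases hy : y = 0
  · simp [hy, lnorm_zero]
  by_cases hxy : x + y = 0
  · rw [hxy, lnorm_zero]; exact le_max_of_le_left (lnorm_nonneg _)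
  have h := HahnSeries.min_order_le_order_add hxy
  unfold lnorm
  rw [if_neg hx, if_neg hy, if_neg hxy, le_max_iff]
  rcases min_le_iff.1 h with h | h
  · left; exact zpow_le_zpow_right₀ h1.le (by lia)
  · right; exact zpow_le_zpow_right₀ h1.le (by lia)

lemma lnorm_sum_le {ι : Type*} (s : Finset ι) (f : ι → L 𝔽) {r : ℝ} (hr : 0 ≤ r)
    (h : ∀ i ∈ s, lnorm (f i) ≤ r) : lnorm (∑ i ∈ s, f i) ≤ r := by
  induction s using Finset.induction_on with
  | empty => simpa [lnorm_zero] using hr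
  | insert a s ha ih =>
    rw [Finset.sum_insert ha]
    refine (lnorm_add _ _).trans (max_le (h a (by simp)) (ih fun i hi => h i (by simp [hi])))

lemma one_le_lnorm {x : L 𝔽} (h : IsPoly x) (hx : x ≠ 0) : 1 ≤ lnorm x := by
  have h1 := card_gt_one (𝔽 := 𝔽)
  unfold lnorm
  rw [if_neg hx]
  apply one_le_zpow₀ h1.le
  by_contra hc
  exact HahnSeries.coeff_order_eq_zero.not.2 hx (h _ (by lia))

lemma lnorm_lt_one {x : L 𝔽} (h : ∀ i : ℤ, i ≤ 0 → x.coeff i = 0) : lnorm x < 1 := by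
  have h1 := card_gt_one (𝔽 := 𝔽)
  unfold lnorm
  split_ifs with hx
  · norm_num
  apply zpow_lt_one_of_neg₀ h1
  by_contra hc
  exact HahnSeries.coeff_order_eq_zero.not.2 hx (h _ (by lia))

/-- polynomial subring -/
def polyRing (𝔽 : Type) [Field 𝔽] : Subring (L 𝔽) where
  carrier := {x | IsPoly x}
  mul_mem' := by
    intro a b ha hb i hi
    rw [HahnSeries.coeff_mul]
    apply Finset.sum_eq_zero
    intro p hp
    rw [Finset.mem_addAntidiagonal] at hp
    by_cases h : 0 < p.1
    · rw [ha _ h, zero_mul]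
    · rw [hb p.2 (by lia), mul_zero]
  one_mem' := by
    intro i hi
    rw [HahnSeries.coeff_one, if_neg (by lia)]
  add_mem' := by
    intro a b ha hb i hi
    simp [ha i hi, hb i hi]
  zero_mem' := by intro i hi; simp
  neg_mem' := by
    intro a ha i hi
    simp [ha i hi]

lemma mem_polyRing {x : L 𝔽} : x ∈ polyRing 𝔽 ↔ IsPoly x := Iff.rfl

lemma exists_poly_part (z : L 𝔽) : ∃ p : L 𝔽, IsPoly p ∧ lnorm (z - p) < 1 := by
  refine ⟨⟨fun i => if i ≤ 0 then z.coeff i else 0, z.isPWO_support.mono ?_⟩, ?_, ?_⟩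
  · intro i hi
    simp only [Function.mem_support] at hi
    by_cases h : i ≤ 0
    · simpa [h] using hi
    · simp [h] at hi
  · intro i hi
    simp [not_le.2 hi]
  · apply lnorm_lt_one
    intro i hi
    simp [hi]

lemma finite_poly (R : ℝ) : {x : L 𝔽 | IsPoly x ∧ lnorm x ≤ R}.Finite := by
  have h1 := card_gt_one (𝔽 := 𝔽)
  obtain ⟨M, hM⟩ := pow_unbounded_of_one_lt R h1
  have : Function.Injective (fun (x : {x : L 𝔽 | IsPoly x ∧ lnorm x ≤ R}) =>
      fun (i : Set.Icc (-(M : ℤ)) 0) => x.1.coeff i) := by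
    rintro ⟨x, hx, hxR⟩ ⟨y, hy, hyR⟩ h
    have key : ∀ z : L 𝔽, lnorm z ≤ R → ∀ i : ℤ, i < -(M : ℤ) → z.coeff i = 0 := by
      intro z hz i hi
      by_cases hz0 : z = 0
      · simp [hz0]
      apply HahnSeries.coeff_eq_zero_of_lt_order
      unfold lnorm at hz
      rw [if_neg hz0] at hz
      have := hz.trans_lt hM
      rw [← zpow_natCast, zpow_lt_zpow_iff_right₀ h1] at this
      lia
    ext i
    simp only
    by_cases hi : 0 < i
    · rw [hx i hi, hy i hi]
    by_cases hi' : i < -(M : ℤ)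
    · rw [key x hxR i hi', key y hyR i hi']
    · exact congrFun h ⟨i, by constructor <;> lia⟩
  exact Set.finite_coe_iff.1 (Finite.of_injective _ this)

section FAlemmas

variable {N : ℕ} [Nonempty (Fin N)] {A : Matrix (Fin N) (Fin N) (L 𝔽)} {c : Fin N → ℝ}

lemma sup_bdd (f : Fin N → ℝ) : BddAbove (Set.range f) := (Set.finite_range f).bddAbove

lemma FA_nonneg (hc : ∀ j, 0 < c j) (x : Fin N → L 𝔽) : 0 ≤ FA A c x :=
  Real.iSup_nonneg fun j => mul_nonneg (inv_nonneg.2 (hc j).le) (lnorm_nonneg _)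

lemma FA_le_of (x : Fin N → L 𝔽) (j : Fin N) :
    (c j)⁻¹ * lnorm (∑ i, x i * A i j) ≤ FA A c x :=
  le_ciSup (f := fun j => (c j)⁻¹ * lnorm (∑ i, x i * A i j)) (sup_bdd _) j

lemma FA_zero : FA A c (0 : Fin N → L 𝔽) = 0 := by
  simp [FA, lnorm_zero]

lemma FA_add (hc : ∀ j, 0 < c j) (x y : Fin N → L 𝔽) :
    FA A c (x + y) ≤ max (FA A c x) (FA A c y) := by
  apply ciSup_le
  intro j
  have e : ∑ i, (x + y) i * A i j = ∑ i, x i * A i j + ∑ i, y i * A i j := by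
    simp [add_mul, Finset.sum_add_distrib]
  rw [e]
  have h := mul_le_mul_of_nonneg_left (lnorm_add (∑ i, x i * A i j) (∑ i, y i * A i j))
    (inv_nonneg.2 (hc j).le)
  rw [mul_max_of_nonneg _ _ (inv_nonneg.2 (hc j).le)] at h
  exact h.trans (max_le_max (FA_le_of _ _) (FA_le_of _ _))

lemma FA_smul (t : L 𝔽) (x : Fin N → L 𝔽) : FA A c (t • x) = lnorm t * FA A c x := by
  unfold FA
  rw [Real.mul_iSup_of_nonneg (lnorm_nonneg _)]
  congr 1
  ext j
  have : ∑ i, (t • x) i * A i j = t * ∑ i, x i * A i j := by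
    simp [Finset.mul_sum, mul_assoc]
  rw [this, lnorm_mul]; ring

lemma FA_sum_lt (hc : ∀ j, 0 < c j) {ι : Type*} (s : Finset ι) (f : ι → Fin N → L 𝔽) {r : ℝ}
    (hr : 0 < r) (h : ∀ i ∈ s, FA A c (f i) < r) : FA A c (∑ i ∈ s, f i) < r := by
  induction s using Finset.induction_on with
  | empty => simpa [FA_zero] using hr
  | insert a s ha ih =>
    rw [Finset.sum_insert ha]
    exact (FA_add hc _ _).trans_lt (max_lt (h a (by simp)) (ih fun i hi => h i (by simp [hi])))

lemma FA_sum_le (hc : ∀ j, 0 < c j) {ι : Type*} (s : Finset ι) (f : ι → Fin N → L 𝔽) {r : ℝ}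
    (hr : 0 ≤ r) (h : ∀ i ∈ s, FA A c (f i) ≤ r) : FA A c (∑ i ∈ s, f i) ≤ r := by
  induction s using Finset.induction_on with
  | empty => simpa [FA_zero] using hr
  | insert a s ha ih =>
    rw [Finset.sum_insert ha]
    exact (FA_add hc _ _).trans (max_le (h a (by simp)) (ih fun i hi => h i (by simp [hi])))

lemma FA_bound (hA : IsUnit A) (hc : ∀ j, 0 < c j) (R : ℝ) :
    ∃ R' : ℝ, ∀ x : Fin N → L 𝔽, FA A c x ≤ R → ∀ i, lnorm (x i) ≤ R' := by
  have hdet := (Matrix.isUnit_iff_isUnit_det A).1 hA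
  refine ⟨∑ i, ∑ j, c j * |R| * lnorm (A⁻¹ j i), fun x hx i => ?_⟩
  have hnn : ∀ j i, 0 ≤ c j * |R| * lnorm (A⁻¹ j i) := fun j i =>
    mul_nonneg (mul_nonneg (hc j).le (abs_nonneg _)) (lnorm_nonneg _)
  have hx' : x i = ∑ j, (∑ i, x i * A i j) * A⁻¹ j i := by
    have : x = Matrix.vecMul (Matrix.vecMul x A) A⁻¹ := by
      rw [Matrix.vecMul_vecMul, Matrix.mul_nonsing_inv _ hdet, Matrix.vecMul_one]
    exact congrFun this i
  rw [hx']
  apply lnorm_sum_le _ _ (Finset.sum_nonneg fun i _ => Finset.sum_nonneg fun j _ => hnn j i)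
  intro j _
  rw [lnorm_mul]
  have h1 : lnorm (∑ i, x i * A i j) ≤ c j * |R| := by
    have := ((FA_le_of (A := A) (c := c) x j).trans hx).trans (le_abs_self R)
    rwa [inv_mul_le_iff₀ (hc j)] at this
  refine (mul_le_mul_of_nonneg_right h1 (lnorm_nonneg _)).trans ?_
  refine (Finset.single_le_sum (f := fun j => c j * |R| * lnorm (A⁻¹ j i))
    (fun j _ => hnn j i) (Finset.mem_univ j)).trans ?_
  exact Finset.single_le_sum (f := fun i => ∑ j, c j * |R| * lnorm (A⁻¹ j i))
    (fun i _ => Finset.sum_nonneg fun j _ => hnn j i) (Finset.mem_univ i)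

lemma FA_pos (hA : IsUnit A) (hc : ∀ j, 0 < c j) {x : Fin N → L 𝔽} (hx : x ≠ 0) :
    0 < FA A c x := by
  refine lt_of_le_of_ne (FA_nonneg hc x) fun h => hx ?_
  have hz : Matrix.vecMul x A = 0 := by
    ext1 j
    by_contra hj
    have h1 := FA_le_of (A := A) (c := c) x j
    rw [← h] at h1
    have h2 : 0 < (c j)⁻¹ * lnorm (∑ i, x i * A i j) :=
      mul_pos (inv_pos.2 (hc j)) (lnorm_pos hj)
    linarith
  have hdet := (Matrix.isUnit_iff_isUnit_det A).1 hA
  have : x = Matrix.vecMul (Matrix.vecMul x A) A⁻¹ := by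
    rw [Matrix.vecMul_vecMul, Matrix.mul_nonsing_inv _ hdet, Matrix.vecMul_one]
  rw [this, hz, Matrix.zero_vecMul]

/-- unimodular pair of polynomial matrices -/
def Uni (B C : Matrix (Fin N) (Fin N) (L 𝔽)) : Prop :=
  (∀ i j, IsPoly (B i j)) ∧ (∀ i j, IsPoly (C i j)) ∧ B * C = 1

lemma isPoly_matmul {B C : Matrix (Fin N) (Fin N) (L 𝔽)} (hB : ∀ i j, IsPoly (B i j))
    (hC : ∀ i j, IsPoly (C i j)) (i j : Fin N) : IsPoly ((B * C) i j) := by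
  rw [Matrix.mul_apply]
  exact Subring.sum_mem (polyRing 𝔽)
    fun k _ => (polyRing 𝔽).mul_mem (hB i k) (hC k j)

lemma exists_min_uni (hA : IsUnit A) (hc : ∀ j, 0 < c j) :
    ∃ B C, Uni B C ∧ ∀ B' C', Uni B' C' →
      ∑ i, FA A c (B i) ≤ ∑ i, FA A c (B' i) := by
  set R := ∑ i, FA A c ((1 : Matrix (Fin N) (Fin N) (L 𝔽)) i) with hR
  let S : Set (Matrix (Fin N) (Fin N) (L 𝔽)) :=
    {B | (∃ C, Uni B C) ∧ ∑ i, FA A c (B i) ≤ R}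
  have hS1 : (1 : Matrix (Fin N) (Fin N) (L 𝔽)) ∈ S := by
    have h1 : ∀ i j, IsPoly ((1 : Matrix (Fin N) (Fin N) (L 𝔽)) i j) := by
      intro i j
      rw [Matrix.one_apply]
      split_ifs
      · exact (polyRing 𝔽).one_mem
      · exact (polyRing 𝔽).zero_mem
    exact ⟨⟨1, h1, h1, by simp⟩, le_rfl⟩
  have hfin : S.Finite := by
    obtain ⟨R', hR'⟩ := FA_bound hA hc R
    have : {f : Fin N → Fin N → L 𝔽 |
        ∀ i, f i ∈ {g : Fin N → L 𝔽 | ∀ j, g j ∈ {x : L 𝔽 | IsPoly x ∧ lnorm x ≤ R'}}}.Finite :=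
      Set.Finite.pi' fun i => Set.Finite.pi' fun j => finite_poly R'
    refine this.subset ?_
    rintro B ⟨⟨C, hB, -, -⟩, hle⟩ i j
    refine ⟨hB i j, hR' (B i) ?_ j⟩
    exact (Finset.single_le_sum (f := fun i => FA A c (B i))
      (fun i _ => FA_nonneg hc _) (Finset.mem_univ i)).trans hle
  obtain ⟨B, ⟨⟨C, hBC⟩, hBR⟩, hmin⟩ :=
    Set.exists_min_image S (fun B => ∑ i, FA A c (B i)) hfin ⟨1, hS1⟩
  refine ⟨B, C, hBC, fun B' C' h' => ?_⟩
  by_cases h : ∑ i, FA A c (B' i) ≤ R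
  · exact hmin B' ⟨⟨C', h'⟩, h⟩
  · exact hBR.trans (not_le.1 h).le

lemma uni_row_ne {B C : Matrix (Fin N) (Fin N) (L 𝔽)} (h : B * C = 1) (i : Fin N) :
    B i ≠ 0 := by
  intro h0
  have := congrFun (congrFun h i) i
  rw [Matrix.mul_apply] at this
  simp [h0] at this

lemma uni_rowop {B C : Matrix (Fin N) (Fin N) (L 𝔽)} (h : Uni B C) (j : Fin N)
    (u : Fin N → L 𝔽) (hu : ∀ i, IsPoly (u i)) (huj : u j = 0) :
    ∃ B' C', Uni B' C' ∧ (∀ i, i ≠ j → B' i = B i) ∧ B' j = B j + ∑ i, u i • B i := by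
  obtain ⟨hB, hC, hBC⟩ := h
  let E : Matrix (Fin N) (Fin N) (L 𝔽) := Matrix.of fun a b => if a = j then u b else 0
  have hE : ∀ a b, IsPoly (E a b) := by
    intro a b
    simp only [E, Matrix.of_apply]
    split_ifs
    · exact hu b
    · exact (polyRing 𝔽).zero_mem
  have hE2 : E * E = 0 := by
    ext1 a b
    rw [Matrix.mul_apply]
    apply Finset.sum_eq_zero
    intro k _
    simp only [E, Matrix.of_apply]
    by_cases hk : k = j
    · simp [hk, huj]
    · simp [hk]
  have hEB : ∀ a, (E * B) a = if a = j then ∑ i, u i • B i else 0 := by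
    intro a
    ext1 b
    rw [Matrix.mul_apply]
    by_cases ha : a = j
    · simp [E, ha, Finset.sum_apply]
    · simp [E, ha]
  refine ⟨B + E * B, C - C * E, ⟨?_, ?_, ?_⟩, ?_, ?_⟩
  · intro a b
    exact (polyRing 𝔽).add_mem (hB a b) (isPoly_matmul hE hB a b)
  · intro a b
    exact (polyRing 𝔽).sub_mem (hC a b) (isPoly_matmul hC hE a b)
  · have : (B + E * B) * (C - C * E) = B * C - (B * C) * E + E * (B * C) - E * (B * C) * E := by
      noncomm_ring
    rw [this, hBC]
    simp [hE2]
  · intro i hi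
    have : (B + E * B) i = B i + (E * B) i := rfl
    rw [this, hEB, if_neg hi, add_zero]
  · have : (B + E * B) j = B j + (E * B) j := rfl
    rw [this, hEB, if_pos rfl]

lemma exists_reduced (hA : IsUnit A) (hc : ∀ j, 0 < c j) :
    ∃ B C, Uni B C ∧ ∀ t : Fin N → L 𝔽, ∀ i,
      FA A c (B i) * lnorm (t i) ≤ FA A c (∑ l, t l • B l) := by
  obtain ⟨B, C, hBC, hmin⟩ := exists_min_uni (N := N) hA hc
  refine ⟨B, C, hBC, fun t i₀ => ?_⟩
  by_contra hlt
  rw [not_le] at hlt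
  have hpos : ∀ i, 0 < FA A c (B i) := fun i => FA_pos hA hc (uni_row_ne hBC.2.2 i)
  obtain ⟨i₁, -, h₁⟩ := Finset.exists_max_image Finset.univ
    (fun i => FA A c (B i) * lnorm (t i)) ⟨i₀, Finset.mem_univ _⟩
  set M := FA A c (B i₁) * lnorm (t i₁) with hM
  obtain ⟨j, hj, hjmax⟩ := Finset.exists_max_image
    (Finset.univ.filter fun i => FA A c (B i) * lnorm (t i) = M)
    (fun i => FA A c (B i)) ⟨i₁, by simp [hM]⟩
  simp only [Finset.mem_filter, Finset.mem_univ, true_and] at hj hjmax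
  have hxM : FA A c (∑ l, t l • B l) < M := hlt.trans_le (h₁ i₀ (Finset.mem_univ _))
  have hMpos : 0 < M := (FA_nonneg hc _).trans_lt hxM
  have htj : t j ≠ 0 := by
    intro h
    rw [h, lnorm_zero, mul_zero] at hj
    exact hMpos.ne hj
  have htjn := lnorm_pos htj
  have hinv : lnorm (t j)⁻¹ = (lnorm (t j))⁻¹ := by
    apply eq_inv_of_mul_eq_one_left
    rw [← lnorm_mul, inv_mul_cancel₀ htj, lnorm_one]
  have hMj : (lnorm (t j))⁻¹ * M = FA A c (B j) := by
    rw [← hj]; field_simp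
  have key : ∀ i, i ≠ j → ∃ u : L 𝔽, IsPoly u ∧
      FA A c ((u - (t j)⁻¹ * t i) • B i) < FA A c (B j) := by
    intro i hi
    by_cases hiM : FA A c (B i) * lnorm (t i) = M
    · obtain ⟨u, hu, hlt⟩ := exists_poly_part ((t j)⁻¹ * t i)
      refine ⟨u, hu, ?_⟩
      rw [FA_smul, ← lnorm_neg, neg_sub]
      calc _ < 1 * FA A c (B i) := mul_lt_mul_of_pos_right hlt (hpos i)
        _ ≤ _ := by rw [one_mul]; exact hjmax i hiM
    · refine ⟨0, (polyRing 𝔽).zero_mem, ?_⟩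
      have : FA A c (B i) * lnorm (t i) < M :=
        lt_of_le_of_ne (h₁ i (Finset.mem_univ _)) hiM
      rw [FA_smul, zero_sub, lnorm_neg, lnorm_mul, hinv, ← hMj, mul_assoc, mul_comm (lnorm (t i))]
      exact mul_lt_mul_of_pos_left this (inv_pos.2 htjn)
  choose! u hu hu' using key
  let u' : Fin N → L 𝔽 := fun i => if i = j then 0 else u i
  obtain ⟨B', C', hU, hB'i, hB'j⟩ := uni_rowop hBC j u' (by
    intro i
    by_cases h : i = j
    · simp only [u', h, if_true]; exact (polyRing 𝔽).zero_mem
    · simp only [u', h, if_false]; exact hu i h) (by simp [u'])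
  have hlt' : FA A c (B' j) < FA A c (B j) := by
    have e : B' j = (t j)⁻¹ • (∑ l, t l • B l) +
        ∑ i ∈ Finset.univ.erase j, (u i - (t j)⁻¹ * t i) • B i := by
      have e1 : ∑ i, u' i • B i = ∑ i ∈ Finset.univ.erase j, u i • B i := by
        rw [← Finset.add_sum_erase _ _ (Finset.mem_univ j)]
        simp only [u', if_true, zero_smul, zero_add]
        exact Finset.sum_congr rfl fun i hi => by rw [if_neg (Finset.ne_of_mem_erase hi)]
      rw [hB'j, e1, ← Finset.add_sum_erase _ (fun l => t l • B l) (Finset.mem_univ j)]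
      simp only [sub_smul, Finset.sum_sub_distrib, smul_add, Finset.smul_sum, smul_smul,
        inv_mul_cancel₀ htj, one_smul]
      abel
    rw [e]
    refine (FA_add hc _ _).trans_lt (max_lt ?_ ?_)
    · rw [FA_smul, hinv, ← hMj]
      exact mul_lt_mul_of_pos_left hxM (inv_pos.2 htjn)
    · exact FA_sum_lt hc _ _ (hpos j) fun i hi => hu' i (Finset.ne_of_mem_erase hi)
  have := hmin B' C' hU
  have h2 : ∑ i, FA A c (B' i) < ∑ i, FA A c (B i) := by
    apply Finset.sum_lt_sum
    · intro i _
      by_cases h : i = j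
      · rw [h]; exact hlt'.le
      · rw [hB'i i h]
    · exact ⟨j, Finset.mem_univ _, hlt'⟩
  linarith

lemma sum_smul_eq {B C : Matrix (Fin N) (Fin N) (L 𝔽)} (h : B * C = 1) (x : Fin N → L 𝔽) :
    x = ∑ l, (Matrix.vecMul x C) l • B l := by
  have h' : C * B = 1 := mul_eq_one_comm.1 h
  have : x = Matrix.vecMul (Matrix.vecMul x C) B := by
    rw [Matrix.vecMul_vecMul, h', Matrix.vecMul_one]
  conv_lhs => rw [this, Matrix.vecMul_eq_sum]

lemma succMin_eq (F : (Fin N → L 𝔽) → ℝ) {B C : Matrix (Fin N) (Fin N) (L 𝔽)} (hU : Uni B C)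
    (w : Fin N → ℝ) (hw : ∀ i, 0 < w i) (hmono : Monotone w)
    (hF : ∀ x, F x = ⨆ i, w i * lnorm (Matrix.vecMul x C i)) (j : Fin N) :
    succMin F (j + 1) = w j := by
  obtain ⟨hB, hC, hBC⟩ := hU
  have hFB : ∀ i, F (B i) = w i := by
    intro i
    have e : Matrix.vecMul (B i) C = (1 : Matrix (Fin N) (Fin N) (L 𝔽)) i := by
      rw [← hBC]; rfl
    rw [hF, e]
    apply le_antisymm
    · apply ciSup_le
      intro l
      rw [Matrix.one_apply]
      split_ifs with h
      · rw [lnorm_one, mul_one, h]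
      · rw [lnorm_zero, mul_zero]; exact (hw i).le
    · refine le_trans ?_ (le_ciSup (sup_bdd _) i)
      rw [Matrix.one_apply_eq, lnorm_one, mul_one]
  have hli : LinearIndependent (L 𝔽) (fun i => B i) := by
    have : IsUnit B := IsUnit.of_mul_eq_one _ hBC
    exact Matrix.linearIndependent_rows_of_isUnit this
  have hmem : ∀ lam, w j < lam → lam ∈ {lam : ℝ | 0 < lam ∧ ∃ v : Fin (j + 1) → (Fin N → L 𝔽),
      (∀ r, ∀ i, IsPoly (v r i)) ∧ LinearIndependent (L 𝔽) v ∧ ∀ r, F (v r) < lam} := by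
    intro lam hlam
    refine ⟨(hw j).trans hlam, fun r => B (Fin.castLE j.2 r), fun r i => hB _ i,
      hli.comp _ (Fin.castLE_injective _), fun r => ?_⟩
    rw [hFB]
    refine (hmono ?_).trans_lt hlam
    rw [Fin.le_def]
    simp only [Fin.val_castLE]
    lia
  apply csInf_eq_of_forall_ge_of_forall_gt_exists_lt
  · exact ⟨w j + 1, hmem _ (by linarith)⟩
  · rintro lam ⟨hl, v, hvp, hvi, hvF⟩
    have hex : ∃ r, ∃ i, j ≤ i ∧ Matrix.vecMul (v r) C i ≠ 0 := by
      by_contra hno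
      push Not at hno
      let b : Fin j → (Fin N → L 𝔽) := fun i => B (Fin.castLE j.2.le i)
      have hsub : Submodule.span (L 𝔽) (Set.range v) ≤ Submodule.span (L 𝔽) (Set.range b) := by
        rw [Submodule.span_le]
        rintro _ ⟨r, rfl⟩
        rw [SetLike.mem_coe, sum_smul_eq hBC (v r)]
        apply Submodule.sum_mem
        intro l _
        by_cases hl : j ≤ l
        · rw [hno r l hl, zero_smul]; exact Submodule.zero_mem _
        · apply Submodule.smul_mem
          apply Submodule.subset_span
          exact ⟨⟨l, by rw [not_le] at hl; exact hl⟩, rfl⟩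
      have h1 := Submodule.finrank_mono hsub
      rw [finrank_span_eq_card hvi] at h1
      have h2 := finrank_range_le_card (R := L 𝔽) b
      rw [Set.finrank] at h2
      simp only [Fintype.card_fin] at h1 h2
      lia
    obtain ⟨r, i, hji, hne⟩ := hex
    have hp : IsPoly (Matrix.vecMul (v r) C i) := by
      exact Subring.sum_mem (polyRing 𝔽)
        fun k _ => (polyRing 𝔽).mul_mem (hvp r k) (hC k i)
    refine le_trans ?_ (hvF r).le
    rw [hF]
    refine le_trans ?_ (le_ciSup (sup_bdd _) i)
    calc w j ≤ w i := hmono hji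
      _ = w i * 1 := (mul_one _).symm
      _ ≤ _ := mul_le_mul_of_nonneg_left (one_le_lnorm hp hne) (hw i).le
  · intro lam hlam
    obtain ⟨l, h1, h2⟩ := exists_between hlam
    exact ⟨l, hmem l h1, h2⟩

lemma exists_sorted (hA : IsUnit A) (hc : ∀ j, 0 < c j) :
    ∃ B C, Uni B C ∧ Monotone (fun i => FA A c (B i)) ∧ ∀ x : Fin N → L 𝔽,
      FA A c x = ⨆ i, FA A c (B i) * lnorm (Matrix.vecMul x C i) := by
  obtain ⟨B, C, ⟨hB, hC, hBC⟩, hred⟩ := exists_reduced (N := N) hA hc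
  let σ := Tuple.sort (fun i => FA A c (B i))
  have hσ : B.submatrix σ id * C.submatrix id σ = 1 := by
    rw [← Matrix.submatrix_mul _ _ _ _ _ Function.bijective_id, hBC]
    exact Matrix.submatrix_one_equiv σ
  refine ⟨B.submatrix σ id, C.submatrix id σ, ⟨fun i j => hB _ _, fun i j => hC _ _, hσ⟩,
    Tuple.monotone_sort (fun i => FA A c (B i)), fun x => ?_⟩
  apply le_antisymm
  · conv_lhs => rw [sum_smul_eq hσ x]
    have hb : ∀ i, FA A c ((B.submatrix σ id) i) * lnorm (Matrix.vecMul x (C.submatrix id σ) i) ≤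
      ⨆ i, FA A c ((B.submatrix σ id) i) * lnorm (Matrix.vecMul x (C.submatrix id σ) i) :=
        fun i => le_ciSup (f := fun i => FA A c ((B.submatrix σ id) i) *
          lnorm (Matrix.vecMul x (C.submatrix id σ) i)) (sup_bdd _) i
    apply FA_sum_le hc
    · exact Real.iSup_nonneg fun i => mul_nonneg (FA_nonneg hc _) (lnorm_nonneg _)
    · intro i _
      rw [FA_smul, mul_comm]
      exact hb i
  · apply ciSup_le
    intro i
    conv_rhs => rw [sum_smul_eq hBC x]
    exact hred (Matrix.vecMul x C) (σ i)

lemma FAstar_eq (hA : IsUnit A) (hc : ∀ j, 0 < c j) {B C : Matrix (Fin N) (Fin N) (L 𝔽)}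
    (hBC : B * C = 1) (hF : ∀ x : Fin N → L 𝔽,
      FA A c x = ⨆ i, FA A c (B i) * lnorm (Matrix.vecMul x C i)) (y : Fin N → L 𝔽) :
    FAstar A c y = ⨆ i, (FA A c (B i))⁻¹ * lnorm (Matrix.mulVec B y i) := by
  have hne := uni_row_ne hBC
  have hpos : ∀ i, 0 < FA A c (B i) := fun i => FA_pos hA hc (hne i)
  set S := ⨆ i, (FA A c (B i))⁻¹ * lnorm (Matrix.mulVec B y i) with hS
  have hSi : ∀ i, (FA A c (B i))⁻¹ * lnorm (Matrix.mulVec B y i) ≤ S := fun i =>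
    le_ciSup (f := fun i => (FA A c (B i))⁻¹ * lnorm (Matrix.mulVec B y i)) (sup_bdd _) i
  have hS0 : 0 ≤ S := Real.iSup_nonneg fun i =>
    mul_nonneg (inv_nonneg.2 (hpos i).le) (lnorm_nonneg _)
  have hle : ∀ x : {x : Fin N → L 𝔽 // x ≠ 0}, lnorm (dotL x.1 y) / FA A c x.1 ≤ S := by
    rintro ⟨x, hx⟩
    rw [div_le_iff₀ (FA_pos hA hc hx)]
    have e : dotL x y = ∑ l, Matrix.vecMul x C l * Matrix.mulVec B y l := by
      have h' : C * B = 1 := mul_eq_one_comm.1 hBC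
      have : dotProduct (Matrix.vecMul x C) (Matrix.mulVec B y) = dotProduct x y := by
        rw [← Matrix.dotProduct_mulVec, Matrix.mulVec_mulVec, h', Matrix.one_mulVec]
      exact this.symm
    simp only [e]
    apply lnorm_sum_le _ _ (mul_nonneg hS0 (FA_nonneg hc _))
    intro i _
    have h1 : FA A c (B i) * lnorm (Matrix.vecMul x C i) ≤ FA A c x := by
      rw [hF x]
      exact le_ciSup (f := fun i => FA A c (B i) * lnorm (Matrix.vecMul x C i)) (sup_bdd _) i
    have h2 := hSi i
    rw [lnorm_mul]
    calc _ = ((FA A c (B i))⁻¹ * lnorm (Matrix.mulVec B y i)) *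
          (FA A c (B i) * lnorm (Matrix.vecMul x C i)) := by
            have := (hpos i).ne'
            field_simp
      _ ≤ _ := mul_le_mul h2 h1 (mul_nonneg (hpos i).le (lnorm_nonneg _)) hS0
  haveI : Nonempty {x : Fin N → L 𝔽 // x ≠ 0} :=
    ⟨⟨B (Classical.arbitrary _), hne _⟩⟩
  apply le_antisymm
  · exact ciSup_le hle
  · apply ciSup_le
    intro i
    have hb : BddAbove (Set.range fun x : {x : Fin N → L 𝔽 // x ≠ 0} =>
        lnorm (dotL x.1 y) / FA A c x.1) := ⟨S, by rintro _ ⟨x, rfl⟩; exact hle x⟩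
    refine le_trans ?_ (le_ciSup hb ⟨B i, hne i⟩)
    rw [div_eq_inv_mul]
    exact le_rfl

end FAlemmas

/-- **Theorem (Statement 4).** For an invertible `(m+n) × (m+n)` matrix `A` over `ℒ`,
if `λ₁, …, λ_{m+n}` are the successive minima of `F_A` and `σ₁, …, σ_{m+n}` those of
the polar distance function `F_A^*`, then `λ_m σ_{n+1} = 1`. -/
theorem polar_minima (𝔽 : Type) [Field 𝔽] [Fintype 𝔽] (m n : ℕ)
    (hm : 0 < m) (hn : 0 < n)
    (A : Matrix (Fin (m + n)) (Fin (m + n)) (L 𝔽)) (hA : IsUnit A)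
    (c : Fin (m + n) → ℝ) (hc : ∀ j, 0 < c j) :
    succMin (FA A c) m * succMin (FAstar A c) (n + 1) = 1 := by
  haveI : Nonempty (Fin (m + n)) := ⟨⟨0, by lia⟩⟩
  obtain ⟨B, C, ⟨hB, hC, hBC⟩, hmono, hF⟩ := exists_sorted hA hc
  have hpos : ∀ i, 0 < FA A c (B i) := fun i => FA_pos hA hc (uni_row_ne hBC i)
  have h1 := succMin_eq (FA A c) ⟨hB, hC, hBC⟩ (fun i => FA A c (B i)) hpos hmono hF
    ⟨m - 1, by lia⟩
  have hU' : Uni (C.transpose.submatrix Fin.rev id) (B.transpose.submatrix id Fin.rev) := by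
    refine ⟨fun i j => hC _ _, fun i j => hB _ _, ?_⟩
    rw [← Matrix.submatrix_mul _ _ _ _ _ Function.bijective_id, ← Matrix.transpose_mul, hBC,
      Matrix.transpose_one]
    exact Matrix.submatrix_one_equiv Fin.revPerm
  have h2 := succMin_eq (FAstar A c) hU' (fun i => (FA A c (B (Fin.rev i)))⁻¹)
    (fun i => inv_pos.2 (hpos _))
    (fun i j hij => inv_anti₀ (hpos _) (hmono (Fin.rev_le_rev.2 hij)))
    (fun y => by
      rw [FAstar_eq hA hc hBC hF y,
        ← Equiv.iSup_comp (g := fun i => (FA A c (B i))⁻¹ * lnorm (Matrix.mulVec B y i))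
          Fin.revPerm]
      congr 1
      ext i
      rw [← Matrix.vecMul_transpose]
      rfl) ⟨n, by lia⟩
  have e : Fin.rev (⟨n, by lia⟩ : Fin (m + n)) = ⟨m - 1, by lia⟩ := by
    ext; simp only [Fin.val_rev]; lia
  simp only [e] at h2
  have hm1 : m - 1 + 1 = m := by lia
  simp only [hm1] at h1
  rw [h1, h2]
  exact mul_inv_cancel₀ (hpos _).ne'

end FSBad
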